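/- Discrete parabolic Caccioppoli inequality: There exists a constant C > 0 depending only on constants 0 < a ≤ A < ∞ such that the following holds. Let x₀ ∈ ℤ², r ≥ 1, and for each nearest-neighbor edge b of ℤ² and each t ∈ [0, 2r²] let c_t(b) ∈ [a, A] be measurable in t. Suppose f : [0, 2r²] × ℤ² → ℝ is such that for every x ∈ B(x₀, 2r), t ↦ f_t(x) is differentiable with ∂_t f_t(x) = Σ_{y∼x} c_t((x, y)) (f_t(y) − f_t(x)) for t ∈ [0, 2r²]. Then ∫_{r²}^{2r²} Σ_{b ∈ B*(x₀, r)} |∇f_t(b)|² dt ≤ (C/r²) ∫_0^{2r²} Σ_{y ∈ B(x₀, 2r)} f_t(y)² dt, where B*(x₀, r) denotes the set of nearest-neighbor edges with both endpoints in B(x₀, r). -/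

import Mathlib

/-!
The proof is the energy method with a cutoff in space and in time.

Let `η` be the spatial cutoff (`cutoff`): it equals `1` on `B(x₀, r)`, vanishes outside
`B(x₀, 2r - 1)`, and changes by at most `2 / r` across an edge. Because its support stays one step
inside `B(x₀, 2r)`, only values of `f` in `B(x₀, 2r)` enter the estimate. With `F = ∑ η² f²`,
`S = ∑_{B(x₀, 2r)} f²` and `E = ∑_{B*(x₀, r)} |∇f|²`, summation by parts (`sum_by_parts`) and the
one-edge inequality `edge_ineq` give (`energy_ineq`)
`F' ≤ (32 A / r²) S - (a / 2) E`.

With the linear time weight `t / r²`, which is at most `2` on `[0, 2r²]` and at least `1` on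
`[r², 2r²]`, this yields `(t F / r²)' ≤ ((1 + 64 A) / r²) S - (a / 2) (t / r²) E`. The right side is
continuous in `t`, so it can be integrated over `[0, 2r²]` whether or not `F'` is integrable;
since `F ≥ 0`, the claim follows with `C = 2 (1 + 64 A) / a`.
-/

open MeasureTheory ProbabilityTheory Real
open scoped ENNReal NNReal Classical

noncomputable section

abbrev Z2 := ℤ × ℤ

/-- Nearest-neighbor adjacency in `ℤ²` (Euclidean distance one). -/
def adjZ (x y : Z2) : Prop := (x.1 - y.1) ^ 2 + (x.2 - y.2) ^ 2 = 1

/-- Exterior vertex boundary `∂D` of a set `D ⊆ ℤ²`. -/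
def bdry (D : Set Z2) : Set Z2 := {x | x ∉ D ∧ ∃ y ∈ D, adjZ x y}

/-- Euclidean distance on `ℤ²`. -/
def edist2 (x y : Z2) : ℝ :=
  Real.sqrt (((x.1 : ℝ) - (y.1 : ℝ)) ^ 2 + ((x.2 : ℝ) - (y.2 : ℝ)) ^ 2)

/-- Euclidean distance from a point to a set. -/
def distToSet (x : Z2) (S : Set Z2) : ℝ := sInf (edist2 x '' S)

/-- Euclidean diameter of a set in `ℤ²`. -/
def diamZ (D : Set Z2) : ℝ := sSup {d : ℝ | ∃ x ∈ D, ∃ y ∈ D, d = edist2 x y}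

/-- Discrete Euclidean ball. -/
def ballZ (y : Z2) (r : ℝ) : Set Z2 := {z | edist2 z y ≤ r}

/-- Positively oriented nearest-neighbor edges with at least one endpoint in `D`. -/
def edgesOf (D : Set Z2) : Set (Z2 × Z2) :=
  {b | (b.2 = b.1 + ((1, 0) : Z2) ∨ b.2 = b.1 + ((0, 1) : Z2)) ∧ (b.1 ∈ D ∨ b.2 ∈ D)}

/-- Positively oriented nearest-neighbor edges with both endpoints in `D`. -/
def intEdges (D : Set Z2) : Set (Z2 × Z2) :=
  {b | (b.2 = b.1 + ((1, 0) : Z2) ∨ b.2 = b.1 + ((0, 1) : Z2)) ∧ b.1 ∈ D ∧ b.2 ∈ D}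

/-- Edges with one endpoint in `D` and the other in `∂D`. -/
def bdEdges (D : Set Z2) : Set (Z2 × Z2) :=
  {b | (b.2 = b.1 + ((1, 0) : Z2) ∨ b.2 = b.1 + ((0, 1) : Z2)) ∧
    ((b.1 ∈ D ∧ b.2 ∈ bdry D) ∨ (b.1 ∈ bdry D ∧ b.2 ∈ D))}

/-- The endpoint of an edge lying outside `D` (for boundary edges). -/
def bEnd (D : Set Z2) (b : Z2 × Z2) : Z2 := if b.1 ∈ D then b.2 else b.1

/-- Discrete gradient of `f` across the oriented edge `b`. -/
def grad (f : Z2 → ℝ) (b : Z2 × Z2) : ℝ := f b.2 - f b.1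

/-- `D ⊆ ℤ²` is connected (as an induced subgraph of the nearest-neighbor lattice). -/
def DiscConnected (D : Set Z2) : Prop :=
  D.Nonempty ∧ ∀ x ∈ D, ∀ y ∈ D, ∃ (n : ℕ) (p : ℕ → Z2),
    p 0 = x ∧ p n = y ∧ (∀ i ≤ n, p i ∈ D) ∧ ∀ i < n, adjZ (p i) (p (i + 1))

/-- `h ∨ φ`: the field `h` on `D` extended by the boundary condition `φ` off `D`. -/
def vee (D : Finset Z2) (h : ↥D → ℝ) (φ : Z2 → ℝ) : Z2 → ℝ :=
  fun x => if hx : x ∈ D then h ⟨x, hx⟩ else φ x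

/-- Ginzburg–Landau Hamiltonian `∑_{b ∈ D*} V(∇(h∨φ)(b))`. -/
def glEnergy (V : ℝ → ℝ) (D : Finset Z2) (φ : Z2 → ℝ) (h : ↥D → ℝ) : ℝ :=
  ∑ᶠ b ∈ edgesOf (D : Set Z2), V (grad (vee D h φ) b)

/-- Unnormalized GL measure: density `exp(−H)` w.r.t. Lebesgue measure on `ℝ^D`. -/
def glFree (V : ℝ → ℝ) (D : Finset Z2) (φ : Z2 → ℝ) : Measure (↥D → ℝ) :=
  volume.withDensity fun h => ENNReal.ofReal (Real.exp (-(glEnergy V D φ h)))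

/-- `P` is the GL measure on `D` with potential `V` and boundary condition `φ`:
a probability measure proportional to `exp(−H) dh`. -/
def IsGL (V : ℝ → ℝ) (D : Finset Z2) (φ : Z2 → ℝ) (P : Measure (↥D → ℝ)) : Prop :=
  IsProbabilityMeasure P ∧ ∃ c : ℝ≥0∞, c ≠ 0 ∧ c ≠ ⊤ ∧ P = c • glFree V D φ

/-- `μ` is a coupling of `P` and `Q`. -/
def IsCoupling {α : Type*} [MeasurableSpace α] (μ : Measure (α × α)) (P Q : Measure α) : Prop :=
  IsProbabilityMeasure μ ∧ μ.map Prod.fst = P ∧ μ.map Prod.snd = Q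

/-- `f` is discrete-harmonic at `x`: the sum of the increments to the four neighbors vanishes. -/
def DiscHarmAt (f : Z2 → ℝ) (x : Z2) : Prop :=
  f (x + ((1, 0) : Z2)) + f (x - ((1, 0) : Z2)) + f (x + ((0, 1) : Z2)) + f (x - ((0, 1) : Z2))
    - 4 * f x = 0

/-- `D(r) = {x ∈ D : dist(x, ∂D) ≥ r}`. -/
def innerSet (D : Finset Z2) (r : ℝ) : Set Z2 :=
  {x | x ∈ D ∧ r ≤ distToSet x (bdry (D : Set Z2))}


/-- The four lattice directions. -/
def nbrs : Finset Z2 := {((1, 0) : Z2), ((-1, 0) : Z2), ((0, 1) : Z2), ((0, -1) : Z2)}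

/-! ### The spatial cutoff and the lattice geometry -/

/-- The spatial cutoff: `1` on `B(x₀, r)`, decreasing linearly in the distance with slope `1 / r`,
and truncated to `0` outside `B(x₀, 2r - 1)`, so that every neighbor of a point of its support
still lies in `B(x₀, 2r)`. -/
def cutoff (x0 : Z2) (r : ℝ) (x : Z2) : ℝ :=
  if edist2 x x0 ≤ 2 * r - 1 then min 1 ((2 * r - edist2 x x0) / r) else 0

lemma edist2_eq_norm (x y : Z2) :
    edist2 x y = ‖(((x.1 : ℝ) - y.1 : ℝ) : ℂ) + (((x.2 : ℝ) - y.2 : ℝ) : ℂ) * Complex.I‖ := by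
  rw [Complex.norm_add_mul_I, edist2]

lemma abs_edist2_sub_le {x y : Z2} (x0 : Z2) (h : adjZ x y) :
    |edist2 x x0 - edist2 y x0| ≤ 1 := by
  have h1 : edist2 x y = 1 := by
    unfold edist2 adjZ at *
    rw [Real.sqrt_eq_one]
    exact_mod_cast h
  rw [← h1, edist2_eq_norm, edist2_eq_norm, edist2_eq_norm]
  refine (abs_norm_sub_norm_le _ _).trans (le_of_eq ?_)
  congr 1
  push_cast
  ring

lemma adjZ_symm {x y : Z2} (h : adjZ x y) : adjZ y x := by
  unfold adjZ at *
  linarith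

lemma adjZ_iff (x y : Z2) : adjZ x y ↔ y - x ∈ nbrs := by
  obtain ⟨x1, x2⟩ := x
  obtain ⟨y1, y2⟩ := y
  simp only [adjZ, nbrs, Finset.mem_insert, Finset.mem_singleton, Prod.mk_sub_mk, Prod.mk.injEq]
  constructor
  · intro h
    have h1 : (x1 - y1) ^ 2 ≤ 1 := by nlinarith [sq_nonneg (x2 - y2)]
    have h2 : (x2 - y2) ^ 2 ≤ 1 := by nlinarith [sq_nonneg (x1 - y1)]
    have a1 : x1 - y1 ≤ 1 := by nlinarith
    have a2 : -1 ≤ x1 - y1 := by nlinarith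
    have b1 : x2 - y2 ≤ 1 := by nlinarith
    have b2 : -1 ≤ x2 - y2 := by nlinarith
    obtain ⟨u, hu⟩ : ∃ u, u = x1 - y1 := ⟨_, rfl⟩
    obtain ⟨v, hv⟩ : ∃ v, v = x2 - y2 := ⟨_, rfl⟩
    rw [← hu] at a1 a2 h
    rw [← hv] at b1 b2 h
    interval_cases u <;> interval_cases v <;> simp at h <;> omega
  · rintro (⟨h1, h2⟩ | ⟨h1, h2⟩ | ⟨h1, h2⟩ | ⟨h1, h2⟩)
    · rw [← neg_sub y1, ← neg_sub y2, h1, h2]; norm_num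
    · rw [← neg_sub y1, ← neg_sub y2, h1, h2]; norm_num
    · rw [← neg_sub y1, ← neg_sub y2, h1, h2]; norm_num
    · rw [← neg_sub y1, ← neg_sub y2, h1, h2]; norm_num

lemma cutoff_nonneg (x0 : Z2) {r : ℝ} (hr : 1 ≤ r) (x : Z2) : 0 ≤ cutoff x0 r x := by
  unfold cutoff
  split_ifs with h
  · exact le_min zero_le_one (div_nonneg (by linarith) (by linarith))
  · exact le_rfl

lemma cutoff_le_one (x0 : Z2) (r : ℝ) (x : Z2) : cutoff x0 r x ≤ 1 := by
  unfold cutoff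
  split_ifs with h
  · exact min_le_left _ _
  · exact zero_le_one

lemma cutoff_eq_one (x0 : Z2) {r : ℝ} (hr : 1 ≤ r) {x : Z2} (hx : x ∈ ballZ x0 r) :
    cutoff x0 r x = 1 := by
  have hx' : edist2 x x0 ≤ r := hx
  unfold cutoff
  rw [if_pos (by linarith)]
  refine min_eq_left ?_
  rw [le_div_iff₀ (by linarith)]
  linarith

lemma mem_ball_of_cutoff_ne_zero {x0 : Z2} {r : ℝ} {x y : Z2}
    (hx : cutoff x0 r x ≠ 0) (h : adjZ x y) : y ∈ ballZ x0 (2 * r) := by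
  have h1 : edist2 x x0 ≤ 2 * r - 1 := by
    by_contra hc
    exact hx (if_neg hc)
  have := (abs_le.1 (abs_edist2_sub_le x0 h)).1
  change edist2 y x0 ≤ 2 * r
  linarith

lemma cutoff_sub_le (x0 : Z2) {r : ℝ} (hr : 1 ≤ r) {x y : Z2} (h : adjZ x y) :
    cutoff x0 r x - cutoff x0 r y ≤ 2 / r := by
  have hr0 : 0 < r := by linarith
  have hd := abs_le.1 (abs_edist2_sub_le x0 h)
  by_cases hx : edist2 x x0 ≤ 2 * r - 1
  · by_cases hy : edist2 y x0 ≤ 2 * r - 1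
    · rw [cutoff, cutoff, if_pos hx, if_pos hy]
      have h2 : (2 * r - edist2 x x0) / r ≤ (2 * r - edist2 y x0) / r + 2 / r := by
        rw [← add_div]
        gcongr
        linarith
      have h3 : 0 ≤ 2 / r := by positivity
      rcases le_total 1 ((2 * r - edist2 y x0) / r) with h4 | h4
      · rw [min_eq_left h4]
        linarith [min_le_left 1 ((2 * r - edist2 x x0) / r)]
      · rw [min_eq_right h4]
        linarith [min_le_right 1 ((2 * r - edist2 x x0) / r)]
    -- the truncation jump: here `2r - 2 < |x - x₀|`, so the cutoff at `x` is already at most `2 / r`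
    · rw [cutoff, cutoff, if_pos hx, if_neg hy, sub_zero]
      refine (min_le_right _ _).trans ?_
      gcongr
      linarith
  · have := cutoff_nonneg x0 hr y
    have h3 : 0 ≤ 2 / r := by positivity
    rw [cutoff, if_neg hx]
    linarith

lemma cutoff_sub_sq_le (x0 : Z2) {r : ℝ} (hr : 1 ≤ r) {x y : Z2} (h : adjZ x y) :
    (cutoff x0 r y - cutoff x0 r x) ^ 2 ≤ 4 / r ^ 2 := by
  have : |cutoff x0 r y - cutoff x0 r x| ≤ 2 / r :=
    abs_le.2 ⟨by linarith [cutoff_sub_le x0 hr h], cutoff_sub_le x0 hr (adjZ_symm h)⟩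
  calc (cutoff x0 r y - cutoff x0 r x) ^ 2 = |cutoff x0 r y - cutoff x0 r x| ^ 2 := (sq_abs _).symm
    _ ≤ (2 / r) ^ 2 := by gcongr
    _ = 4 / r ^ 2 := by rw [div_pow]; norm_num

/-! ### Finite sums over balls and edges -/

lemma ballZ_finite (x0 : Z2) (s : ℝ) : (ballZ x0 s).Finite := by
  obtain ⟨N, hN⟩ := exists_nat_ge s
  refine (Set.finite_Icc (x0 - ((N : ℤ), (N : ℤ))) (x0 + ((N : ℤ), (N : ℤ)))).subset ?_
  intro z hz
  have hz' : edist2 z x0 ≤ N := le_trans hz hN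
  have h1 : |(z.1 : ℝ) - x0.1| ≤ N := (Real.abs_le_sqrt (by nlinarith)).trans hz'
  have h2 : |(z.2 : ℝ) - x0.2| ≤ N := (Real.abs_le_sqrt (by nlinarith)).trans hz'
  have h1' : |z.1 - x0.1| ≤ N := by exact_mod_cast h1
  have h2' : |z.2 - x0.2| ≤ N := by exact_mod_cast h2
  rw [abs_le] at h1' h2'
  refine ⟨⟨?_, ?_⟩, ⟨?_, ?_⟩⟩ <;> simp <;> omega

lemma intEdges_adj {D : Set Z2} {b : Z2 × Z2} (hb : b ∈ intEdges D) : adjZ b.1 b.2 := by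
  rw [adjZ_iff]
  rcases hb.1 with h | h <;> rw [h] <;> simp [nbrs]

lemma intEdges_finite {D : Set Z2} (hD : D.Finite) : (intEdges D).Finite :=
  (hD.prod hD).subset fun _ hb => ⟨hb.2.1, hb.2.2⟩

/-- A sum over the four neighbors of `x` is a sum over the adjacent points of any finite set
containing them. -/
lemma sum_nbrs_eq {B : Finset Z2} {x : Z2} (hB : ∀ y, adjZ x y → y ∈ B) (h : Z2 → ℝ) :
    ∑ e ∈ nbrs, h (x + e) = ∑ y ∈ B, if adjZ x y then h y else 0 := by
  rw [← Finset.sum_filter]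
  refine Finset.sum_bij' (fun e _ => x + e) (fun y _ => y - x) ?_ ?_ ?_ ?_ ?_
  · intro e he
    have : adjZ x (x + e) := by rw [adjZ_iff]; simpa using he
    simp [this, hB _ this]
  · intro y hy
    exact (adjZ_iff _ _).1 (Finset.mem_filter.1 hy).2
  · intro e _; simp
  · intro y _; simp
  · intro e _; rfl

lemma sum_adj_le (B : Finset Z2) (x : Z2) {k : ℝ} (hk : 0 ≤ k) :
    (∑ y ∈ B, if adjZ x y then k else 0) ≤ 4 * k := by
  rw [← Finset.sum_filter, Finset.sum_const, nsmul_eq_mul]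
  refine mul_le_mul_of_nonneg_right ?_ hk
  have h1 : (B.filter fun y => adjZ x y).card ≤ nbrs.card :=
    Finset.card_le_card_of_injOn (fun y => y - x)
      (fun y hy => (adjZ_iff _ _).1 (Finset.mem_filter.1 hy).2)
      (fun y _ z _ h => by simpa using h)
  have h2 : nbrs.card = 4 := by decide
  rw [h2] at h1
  exact_mod_cast h1

/-- Summation by parts over ordered pairs of adjacent points, for symmetric weights. -/
lemma sum_by_parts (B : Finset Z2) (c : Z2 → Z2 → ℝ) (hc : ∀ x y, c x y = c y x) (g u : Z2 → ℝ) :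
    2 * ∑ x ∈ B, ∑ y ∈ B, (if adjZ x y then g x * (c x y * (u y - u x)) else 0)
      = -∑ x ∈ B, ∑ y ∈ B, (if adjZ x y then c x y * ((u y - u x) * (g y - g x)) else 0) := by
  have h : ∑ x ∈ B, ∑ y ∈ B, (if adjZ x y then g x * (c x y * (u y - u x)) else 0)
      = ∑ x ∈ B, ∑ y ∈ B, (if adjZ x y then g y * (c x y * (u x - u y)) else 0) := by
    rw [Finset.sum_comm]
    refine Finset.sum_congr rfl fun x _ => Finset.sum_congr rfl fun y _ => ?_
    by_cases hxy : adjZ x y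
    · rw [if_pos hxy, if_pos (adjZ_symm hxy), hc y x]
    · rw [if_neg hxy, if_neg fun h => hxy (adjZ_symm h)]
  rw [two_mul]
  nth_rewrite 2 [h]
  rw [← Finset.sum_add_distrib, ← Finset.sum_neg_distrib]
  refine Finset.sum_congr rfl fun x _ => ?_
  rw [← Finset.sum_add_distrib, ← Finset.sum_neg_distrib]
  refine Finset.sum_congr rfl fun y _ => ?_
  split_ifs
  · ring
  · simp

/-! ### The energy inequality at a fixed time -/

/-- The one-edge Caccioppoli inequality, for the values `p, q` of the cutoff and `u, v` of the
function at the two endpoints; Young's inequality absorbs the cross term. -/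
lemma edge_ineq (p q u v : ℝ) :
    (p ^ 2 + q ^ 2) / 4 * (v - u) ^ 2 - (q - p) ^ 2 * (u ^ 2 + v ^ 2)
      ≤ (v - u) * (q ^ 2 * v - p ^ 2 * u) := by
  have h1 := sq_nonneg ((q + p) * (v - u) / 2 + (q - p) * (u + v))
  have h2 := mul_nonneg (sq_nonneg (q - p)) (sq_nonneg (v - u))
  nlinarith

/-- The energy inequality at a fixed time: the left side is the time derivative of
`∑ η² f²` along the equation, `η` being the cutoff. -/
lemma energy_ineq {a A : ℝ} (ha : 0 < a) (x0 : Z2) {r : ℝ} (hr : 1 ≤ r) (c : Z2 → Z2 → ℝ)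
    (hc : ∀ x y, c x y = c y x) (hcb : ∀ x y, adjZ x y → a ≤ c x y ∧ c x y ≤ A) (u : Z2 → ℝ)
    (B : Finset Z2) (hB : ∀ x, x ∈ B ↔ x ∈ ballZ x0 (2 * r))
    (E : Finset (Z2 × Z2)) (hE : ∀ b, b ∈ E ↔ b ∈ intEdges (ballZ x0 r)) :
    ∑ x ∈ B, cutoff x0 r x ^ 2 * (2 * u x * ∑ e ∈ nbrs, c x (x + e) * (u (x + e) - u x))
      ≤ 32 * A / r ^ 2 * ∑ x ∈ B, u x ^ 2 - a / 2 * ∑ b ∈ E, |grad u b| ^ 2 := by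
  have hr0 : 0 < r := by linarith
  set η := cutoff x0 r with hη
  have hstep1 : ∑ x ∈ B, η x ^ 2 * (2 * u x * ∑ e ∈ nbrs, c x (x + e) * (u (x + e) - u x))
      = 2 * ∑ x ∈ B, ∑ y ∈ B,
          (if adjZ x y then (η x ^ 2 * u x) * (c x y * (u y - u x)) else 0) := by
    rw [Finset.mul_sum]
    refine Finset.sum_congr rfl fun x _ => ?_
    by_cases hx : η x = 0
    · simp [hx]
    · rw [sum_nbrs_eq (B := B) (fun y hy => (hB y).2 (mem_ball_of_cutoff_ne_zero hx hy))
        (fun y => c x y * (u y - u x))]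
      have : ∀ y, (if adjZ x y then (η x ^ 2 * u x) * (c x y * (u y - u x)) else 0)
          = (η x ^ 2 * u x) * (if adjZ x y then c x y * (u y - u x) else 0) := by
        intro y; rw [mul_ite, mul_zero]
      simp_rw [this]
      rw [← Finset.mul_sum]
      ring
  rw [hstep1, sum_by_parts B c hc]
  have hpt : ∀ x ∈ B, ∀ y ∈ B,
      -(if adjZ x y then c x y * ((u y - u x) * (η y ^ 2 * u y - η x ^ 2 * u x)) else 0)
      ≤ (if adjZ x y then 4 * A / r ^ 2 * u x ^ 2 else 0)
        + (if adjZ y x then 4 * A / r ^ 2 * u y ^ 2 else 0)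
        - a / 4 * (if adjZ x y then (η x ^ 2 + η y ^ 2) * (u y - u x) ^ 2 else 0) := by
    intro x _ y _
    by_cases hxy : adjZ x y
    · rw [if_pos hxy, if_pos hxy, if_pos hxy, if_pos (adjZ_symm hxy)]
      obtain ⟨c1, c2⟩ := hcb x y hxy
      have h1 := mul_le_mul_of_nonneg_left (edge_ineq (η x) (η y) (u x) (u y)) (ha.le.trans c1)
      have h2 : c x y * ((η y - η x) ^ 2 * (u x ^ 2 + u y ^ 2))
          ≤ A * (4 / r ^ 2 * (u x ^ 2 + u y ^ 2)) := by
        have := cutoff_sub_sq_le x0 hr hxy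
        have hA : 0 ≤ A := by linarith
        gcongr
      have h3 : a * ((η x ^ 2 + η y ^ 2) / 4 * (u y - u x) ^ 2)
          ≤ c x y * ((η x ^ 2 + η y ^ 2) / 4 * (u y - u x) ^ 2) := by gcongr
      have h4 : A * (4 / r ^ 2 * (u x ^ 2 + u y ^ 2))
          = 4 * A / r ^ 2 * u x ^ 2 + 4 * A / r ^ 2 * u y ^ 2 := by ring
      linarith
    · rw [if_neg hxy, if_neg hxy, if_neg hxy, if_neg fun h => hxy (adjZ_symm h)]
      simp
  have hA : 0 ≤ A := by
    have := hcb (0, 0) (1, 0) (by simp [adjZ])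
    linarith
  have hsum := Finset.sum_le_sum fun x hx => Finset.sum_le_sum fun y hy => hpt x hx y hy
  simp only [Finset.sum_neg_distrib, Finset.sum_sub_distrib, Finset.sum_add_distrib,
    ← Finset.mul_sum] at hsum
  have hS : ∑ x ∈ B, ∑ y ∈ B, (if adjZ x y then 4 * A / r ^ 2 * u x ^ 2 else 0)
      ≤ 16 * A / r ^ 2 * ∑ x ∈ B, u x ^ 2 := by
    rw [Finset.mul_sum]
    refine Finset.sum_le_sum fun x _ => ?_
    refine (sum_adj_le B x (by positivity)).trans (le_of_eq (by ring))
  have hS' : ∑ x ∈ B, ∑ y ∈ B, (if adjZ y x then 4 * A / r ^ 2 * u y ^ 2 else 0)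
      ≤ 16 * A / r ^ 2 * ∑ x ∈ B, u x ^ 2 := by
    rw [Finset.sum_comm]
    exact hS
  have hQ : 2 * ∑ b ∈ E, |grad u b| ^ 2
      ≤ ∑ x ∈ B, ∑ y ∈ B, (if adjZ x y then (η x ^ 2 + η y ^ 2) * (u y - u x) ^ 2 else 0) := by
    rw [← Finset.sum_product', Finset.mul_sum]
    refine (Finset.sum_le_sum fun b hb => ?_).trans
      (Finset.sum_le_sum_of_subset_of_nonneg (s := E) ?_ fun b _ _ => ?_)
    · have hb' := (hE b).1 hb
      rw [if_pos (intEdges_adj hb'), hη, cutoff_eq_one x0 hr hb'.2.1, cutoff_eq_one x0 hr hb'.2.2,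
        grad, sq_abs]
      norm_num
    · intro b hb
      have hb' := ((hE b).1 hb).2
      have hsub : ∀ z ∈ ballZ x0 r, z ∈ B := fun z hz => (hB z).2 (by
        have hz' : edist2 z x0 ≤ r := hz
        change edist2 z x0 ≤ 2 * r
        linarith)
      exact Finset.mem_product.2 ⟨hsub _ hb'.1, hsub _ hb'.2⟩
    · split_ifs
      · positivity
      · exact le_rfl
  have hQ' := mul_le_mul_of_nonneg_left hQ (by positivity : 0 ≤ a / 4)
  have e1 : 32 * A / r ^ 2 * ∑ x ∈ B, u x ^ 2 = 16 * A / r ^ 2 * ∑ x ∈ B, u x ^ 2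
    + 16 * A / r ^ 2 * ∑ x ∈ B, u x ^ 2 := by ring
  linarith

/-! ### Integration in time -/

/-- Discrete parabolic Caccioppoli inequality.
There is `C > 0` depending only on `0 < a ≤ A < ∞` such that: if `f` solves
`∂_t f_t(x) = Σ_{y∼x} c_t((x,y))(f_t(y) − f_t(x))` on `B(x₀, 2r) × [0, 2r²]` with rates
`c_t(b) ∈ [a, A]` measurable in `t`, then
`∫_{r²}^{2r²} Σ_{b ∈ B*(x₀,r)} |∇f_t(b)|² dt ≤ (C/r²) ∫_0^{2r²} Σ_{y ∈ B(x₀,2r)} f_t(y)² dt`. -/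
theorem discrete_caccioppoli (a A : ℝ) (ha : 0 < a) (haA : a ≤ A) :
    ∃ C : ℝ, 0 < C ∧
      ∀ (x0 : Z2) (r : ℝ), 1 ≤ r →
      ∀ c : ℝ → Z2 → Z2 → ℝ,
        (∀ t x y, c t x y = c t y x) →
        (∀ t ∈ Set.Icc (0 : ℝ) (2 * r ^ 2), ∀ x y : Z2, adjZ x y →
          a ≤ c t x y ∧ c t x y ≤ A) →
        (∀ x y : Z2, Measurable fun t : Set.Icc (0 : ℝ) (2 * r ^ 2) => c (t : ℝ) x y) →
      ∀ f : ℝ → Z2 → ℝ,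
        (∀ x ∈ ballZ x0 (2 * r), ∀ t ∈ Set.Icc (0 : ℝ) (2 * r ^ 2),
          HasDerivAt (fun s => f s x)
            (∑ e ∈ nbrs, c t x (x + e) * (f t (x + e) - f t x)) t) →
        (∫ t in (r ^ 2)..(2 * r ^ 2), ∑ᶠ b ∈ intEdges (ballZ x0 r), |grad (f t) b| ^ 2)
          ≤ C / r ^ 2 * ∫ t in (0 : ℝ)..(2 * r ^ 2), ∑ᶠ y ∈ ballZ x0 (2 * r), (f t y) ^ 2 := by
  have hA : 0 < A := ha.trans_le haA
  refine ⟨2 * (1 + 64 * A) / a, by positivity, ?_⟩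
  intro x0 r hr c hsymm hcb _ f hf
  have hr0 : 0 < r := by linarith
  have hr2 : 0 < r ^ 2 := by positivity
  set B := (ballZ_finite x0 (2 * r)).toFinset with hBdef
  set E := (intEdges_finite (ballZ_finite x0 r)).toFinset with hEdef
  have hB : ∀ x, x ∈ B ↔ x ∈ ballZ x0 (2 * r) := fun x => Set.Finite.mem_toFinset _
  have hE : ∀ b, b ∈ E ↔ b ∈ intEdges (ballZ x0 r) := fun b => Set.Finite.mem_toFinset _
  simp_rw [finsum_mem_eq_finite_toFinset_sum _ (ballZ_finite x0 (2 * r)),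
    finsum_mem_eq_finite_toFinset_sum _ (intEdges_finite (ballZ_finite x0 r)), ← hBdef, ← hEdef]
  set I := Set.Icc (0 : ℝ) (2 * r ^ 2) with hI
  have hsub : ∀ z ∈ ballZ x0 r, z ∈ ballZ x0 (2 * r) := fun z hz => by
    have hz' : edist2 z x0 ≤ r := hz
    change edist2 z x0 ≤ 2 * r
    linarith
  have hfc : ∀ x ∈ ballZ x0 (2 * r), ContinuousOn (fun t => f t x) I := fun x hx t ht =>
    (hf x hx t ht).continuousAt.continuousWithinAt
  have hSc : ContinuousOn (fun t => ∑ x ∈ B, f t x ^ 2) I :=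
    continuousOn_finsetSum _ fun x hx => (hfc x ((hB x).1 hx)).pow 2
  have hEc : ContinuousOn (fun t => ∑ b ∈ E, |grad (f t) b| ^ 2) I :=
    continuousOn_finsetSum _ fun b hb =>
      (((hfc _ (hsub _ ((hE b).1 hb).2.2)).sub (hfc _ (hsub _ ((hE b).1 hb).2.1))).abs).pow 2
  have htEc : ContinuousOn (fun t => t / r ^ 2 * ∑ b ∈ E, |grad (f t) b| ^ 2) I :=
    (continuousOn_id.div_const _).mul hEc
  set F : ℝ → ℝ := fun t => ∑ x ∈ B, cutoff x0 r x ^ 2 * f t x ^ 2 with hF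
  set F' : ℝ → ℝ := fun t => ∑ x ∈ B, cutoff x0 r x ^ 2 *
    (2 * f t x * ∑ e ∈ nbrs, c t x (x + e) * (f t (x + e) - f t x)) with hF'
  have hFd : ∀ t ∈ I, HasDerivAt F (F' t) t := by
    intro t ht
    refine HasDerivAt.fun_sum fun x hx => ?_
    have := ((hf x ((hB x).1 hx) t ht).fun_pow 2).const_mul (cutoff x0 r x ^ 2)
    simpa using this
  have hGd : ∀ t ∈ I, HasDerivAt (fun t => t / r ^ 2 * F t)
      (1 / r ^ 2 * F t + t / r ^ 2 * F' t) t := fun t ht =>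
    ((hasDerivAt_id t).div_const _).mul (hFd t ht)
  have hFS : ∀ t, F t ≤ ∑ x ∈ B, f t x ^ 2 := fun t => Finset.sum_le_sum fun x _ => by
    have h1 : cutoff x0 r x ^ 2 ≤ 1 :=
      pow_le_one₀ (cutoff_nonneg x0 hr x) (cutoff_le_one x0 r x)
    nlinarith [sq_nonneg (f t x)]
  set φ : ℝ → ℝ := fun t => (1 + 64 * A) / r ^ 2 * ∑ x ∈ B, f t x ^ 2
    - a / 2 * (t / r ^ 2 * ∑ b ∈ E, |grad (f t) b| ^ 2) with hφ
  have hφc : ContinuousOn φ I := (continuousOn_const.mul hSc).sub (continuousOn_const.mul htEc)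
  have hle : ∀ t ∈ I, 1 / r ^ 2 * F t + t / r ^ 2 * F' t ≤ φ t := by
    intro t ht
    have hS0 : 0 ≤ ∑ x ∈ B, f t x ^ 2 := Finset.sum_nonneg fun _ _ => sq_nonneg _
    have h1 := energy_ineq ha x0 hr (c t) (hsymm t) (hcb t ht) (f t) B hB E hE
    have h0 : 0 ≤ t / r ^ 2 := div_nonneg ht.1 hr2.le
    have h2 : t / r ^ 2 ≤ 2 := by rw [div_le_iff₀ hr2]; exact ht.2
    have h3 := mul_le_mul_of_nonneg_left h1 h0
    have h4 : 1 / r ^ 2 * F t ≤ 1 / r ^ 2 * ∑ x ∈ B, f t x ^ 2 := by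
      have := hFS t
      gcongr
    have h5 : t / r ^ 2 * (32 * A / r ^ 2 * ∑ x ∈ B, f t x ^ 2)
        ≤ 2 * (32 * A / r ^ 2 * ∑ x ∈ B, f t x ^ 2) := by gcongr
    have e1 : φ t = 1 / r ^ 2 * ∑ x ∈ B, f t x ^ 2 + 2 * (32 * A / r ^ 2 * ∑ x ∈ B, f t x ^ 2)
        - t / r ^ 2 * (a / 2 * ∑ b ∈ E, |grad (f t) b| ^ 2) := by
      rw [hφ]; ring
    rw [e1]
    rw [mul_sub] at h3
    linarith
  have h02 : (0 : ℝ) ≤ 2 * r ^ 2 := by positivity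
  have hkey := intervalIntegral.sub_le_integral_of_hasDeriv_right_of_le h02
    (fun t ht => (hGd t ht).continuousAt.continuousWithinAt)
    (fun t ht => (hGd t (Set.Ioo_subset_Icc_self ht)).hasDerivWithinAt)
    hφc.integrableOn_Icc (fun t ht => hle t (Set.Ioo_subset_Icc_self ht))
  have hF0 : 0 ≤ F (2 * r ^ 2) := Finset.sum_nonneg fun _ _ => by positivity
  have hpos : 0 ≤ 2 * r ^ 2 / r ^ 2 * F (2 * r ^ 2) - 0 / r ^ 2 * F 0 := by
    rw [zero_div, zero_mul, sub_zero]
    positivity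
  have hint : ∀ g : ℝ → ℝ, ContinuousOn g I →
      IntervalIntegrable g volume 0 (2 * r ^ 2) := fun g hg =>
    ContinuousOn.intervalIntegrable (by rwa [Set.uIcc_of_le h02])
  rw [hφ, intervalIntegral.integral_sub ((hint _ hSc).const_mul _)
    ((hint _ htEc).const_mul _), intervalIntegral.integral_const_mul,
    intervalIntegral.integral_const_mul] at hkey
  have hE0 : ∀ t, 0 ≤ ∑ b ∈ E, |grad (f t) b| ^ 2 := fun t =>
    Finset.sum_nonneg fun _ _ => by positivity
  have h12 : r ^ 2 ≤ 2 * r ^ 2 := by linarith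
  have hmem : r ^ 2 ∈ Set.uIcc (0 : ℝ) (2 * r ^ 2) := by
    rw [Set.uIcc_of_le h02]
    exact ⟨hr2.le, h12⟩
  have hsubint : ∀ g : ℝ → ℝ, ContinuousOn g I →
      IntervalIntegrable g volume (r ^ 2) (2 * r ^ 2) := fun g hg =>
    (hint g hg).mono_set (Set.uIcc_subset_uIcc hmem Set.right_mem_uIcc)
  have hcmp : ∫ t in (r ^ 2)..(2 * r ^ 2), ∑ b ∈ E, |grad (f t) b| ^ 2
      ≤ ∫ t in (0 : ℝ)..(2 * r ^ 2), t / r ^ 2 * ∑ b ∈ E, |grad (f t) b| ^ 2 := by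
    calc ∫ t in (r ^ 2)..(2 * r ^ 2), ∑ b ∈ E, |grad (f t) b| ^ 2
        ≤ ∫ t in (r ^ 2)..(2 * r ^ 2), t / r ^ 2 * ∑ b ∈ E, |grad (f t) b| ^ 2 := by
          refine intervalIntegral.integral_mono_on h12 (hsubint _ hEc) (hsubint _ htEc) ?_
          intro t ht
          have : 1 ≤ t / r ^ 2 := by rw [le_div_iff₀ hr2]; linarith [ht.1]
          exact le_mul_of_one_le_left (hE0 t) this
      _ ≤ ∫ t in (0 : ℝ)..(2 * r ^ 2), t / r ^ 2 * ∑ b ∈ E, |grad (f t) b| ^ 2 := by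
          have hi0 : IntervalIntegrable (fun t => t / r ^ 2 * ∑ b ∈ E, |grad (f t) b| ^ 2)
              volume 0 (r ^ 2) :=
            (hint _ htEc).mono_set (Set.uIcc_subset_uIcc Set.left_mem_uIcc hmem)
          rw [← intervalIntegral.integral_add_adjacent_intervals hi0 (hsubint _ htEc)]
          have : 0 ≤ ∫ t in (0 : ℝ)..(r ^ 2), t / r ^ 2 * ∑ b ∈ E, |grad (f t) b| ^ 2 :=
            intervalIntegral.integral_nonneg hr2.le fun t ht =>
              mul_nonneg (div_nonneg ht.1 hr2.le) (hE0 t)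
          linarith
  have hfin : a / 2 * ∫ t in (r ^ 2)..(2 * r ^ 2), ∑ b ∈ E, |grad (f t) b| ^ 2
      ≤ (1 + 64 * A) / r ^ 2 * ∫ t in (0 : ℝ)..(2 * r ^ 2), ∑ x ∈ B, f t x ^ 2 := by
    have := mul_le_mul_of_nonneg_left hcmp (by positivity : 0 ≤ a / 2)
    linarith
  calc ∫ t in (r ^ 2)..(2 * r ^ 2), ∑ b ∈ E, |grad (f t) b| ^ 2
      = 2 / a * (a / 2 * ∫ t in (r ^ 2)..(2 * r ^ 2), ∑ b ∈ E, |grad (f t) b| ^ 2) := by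
        field_simp
    _ ≤ 2 / a * ((1 + 64 * A) / r ^ 2 *
          ∫ t in (0 : ℝ)..(2 * r ^ 2), ∑ x ∈ B, f t x ^ 2) := by gcongr
    _ = _ := by field_simp

end
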